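/- Let n ≥ 4 with n ∉ {1,3,5}. Then the Brauer algebra Br(D_n, ℂ, 0) with parameter δ = 0 is not a semisimple ring. -/

import Mathlib

open FreeAlgebra

/-- The path graph (Coxeter diagram of type `A_n`) on nodes `1, …, n`
(realized as `Fin n`, node `i` corresponding to index `i-1`): node `i` is
adjacent to node `i+1` for `1 ≤ i ≤ n-1`. -/
def typeA (n : ℕ) : SimpleGraph (Fin n) :=
  SimpleGraph.fromRel (fun i j => (i : ℕ) + 1 = (j : ℕ))

/-- The Coxeter diagram of type `D_n` (`n ≥ 4`) on nodes `1, …, n` (realized as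
`Fin n`, node `i` corresponding to index `i-1`): nodes `1` and `2` are both
adjacent to node `3`, and nodes `i`, `i+1` are adjacent for `3 ≤ i ≤ n-1`. -/
def typeD (n : ℕ) : SimpleGraph (Fin n) :=
  SimpleGraph.fromRel (fun i j =>
    ((i : ℕ) = 0 ∧ (j : ℕ) = 2) ∨ ((i : ℕ) = 1 ∧ (j : ℕ) = 2) ∨
      (2 ≤ (i : ℕ) ∧ (i : ℕ) + 1 = (j : ℕ)))

/-- The Coxeter diagram of type `E_n` (`n = 6, 7, 8`) on nodes `1, …, n`
(realized as `Fin n`, node `i` corresponding to index `i-1`): a path on nodes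
`1, 3, 4, …, n` together with node `2` attached to node `4`. -/
def typeE (n : ℕ) : SimpleGraph (Fin n) :=
  SimpleGraph.fromRel (fun i j =>
    ((i : ℕ) = 0 ∧ (j : ℕ) = 2) ∨ ((i : ℕ) = 1 ∧ (j : ℕ) = 3) ∨
      (2 ≤ (i : ℕ) ∧ (i : ℕ) + 1 = (j : ℕ)))
/-- The defining relations of the Brauer algebra `Br(Q, R, δ)` of simply-laced
type given by the graph `Q`, imposed on the free `R`-algebra on the generators
`R_1, …, R_n` (encoded as `Sum.inl i`) and `E_1, …, E_n` (encoded as `Sum.inr i`). -/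
inductive BrauerRel (n : ℕ) (Q : SimpleGraph (Fin n)) (R : Type*) [CommRing R] (δ : R) :
    FreeAlgebra R (Fin n ⊕ Fin n) → FreeAlgebra R (Fin n ⊕ Fin n) → Prop
  /-- `R_i² = 1` -/
  | rsq (i : Fin n) : BrauerRel n Q R δ (ι R (.inl i) * ι R (.inl i)) 1
  /-- `R_i E_i = E_i` -/
  | re (i : Fin n) : BrauerRel n Q R δ (ι R (.inl i) * ι R (.inr i)) (ι R (.inr i))
  /-- `E_i R_i = E_i` -/
  | er (i : Fin n) : BrauerRel n Q R δ (ι R (.inr i) * ι R (.inl i)) (ι R (.inr i))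
  /-- `E_i² = δ·E_i` -/
  | esq (i : Fin n) : BrauerRel n Q R δ (ι R (.inr i) * ι R (.inr i)) (δ • ι R (.inr i))
  /-- `R_i R_j = R_j R_i` whenever `i ≁ j` -/
  | rr (i j : Fin n) (hne : i ≠ j) (hadj : ¬ Q.Adj i j) :
      BrauerRel n Q R δ (ι R (.inl i) * ι R (.inl j)) (ι R (.inl j) * ι R (.inl i))
  /-- `E_i R_j = R_j E_i` whenever `i ≁ j` -/
  | erc (i j : Fin n) (hne : i ≠ j) (hadj : ¬ Q.Adj i j) :
      BrauerRel n Q R δ (ι R (.inr i) * ι R (.inl j)) (ι R (.inl j) * ι R (.inr i))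
  /-- `E_i E_j = E_j E_i` whenever `i ≁ j` -/
  | ee (i j : Fin n) (hne : i ≠ j) (hadj : ¬ Q.Adj i j) :
      BrauerRel n Q R δ (ι R (.inr i) * ι R (.inr j)) (ι R (.inr j) * ι R (.inr i))
  /-- `R_i R_j R_i = R_j R_i R_j` whenever `i ∼ j` -/
  | braid (i j : Fin n) (hadj : Q.Adj i j) :
      BrauerRel n Q R δ (ι R (.inl i) * ι R (.inl j) * ι R (.inl i))
        (ι R (.inl j) * ι R (.inl i) * ι R (.inl j))
  /-- `R_j R_i E_j = E_i E_j` whenever `i ∼ j` -/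
  | rre (i j : Fin n) (hadj : Q.Adj i j) :
      BrauerRel n Q R δ (ι R (.inl j) * ι R (.inl i) * ι R (.inr j))
        (ι R (.inr i) * ι R (.inr j))
  /-- `R_i E_j R_i = R_j E_i R_j` whenever `i ∼ j` -/
  | rer (i j : Fin n) (hadj : Q.Adj i j) :
      BrauerRel n Q R δ (ι R (.inl i) * ι R (.inr j) * ι R (.inl i))
        (ι R (.inl j) * ι R (.inr i) * ι R (.inl j))

/-- The Brauer algebra `Br(Q, R, δ)` of simply-laced type `Q` over the
commutative ring `R` with parameter `δ ∈ R`. -/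
abbrev BrauerAlgebra (n : ℕ) (Q : SimpleGraph (Fin n)) (R : Type*) [CommRing R] (δ : R) :=
  RingQuot (BrauerRel n Q R δ)

/-!
For every node `i` take an `𝔽₂`-vector `αᵢ` and a linear form `αᵢ^∨` with `αᵢ^∨(αⱼ) = 1` if
`i ∼ j` and `0` otherwise. When `δ` acts as zero, `Br(Q, R, δ)` acts on functions on the ambient
vector space: `Rᵢ` by the transvection `v ↦ v + αᵢ^∨(v) αᵢ`, and `Eᵢ` by the partial map sending
every `v` with `αᵢ^∨(v) = 1` to `αᵢ`. Such a representation exists on two spaces: `V`, where the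
`αᵢ` are distinct, and a quotient `W` of `V` by vectors on which all forms vanish, where nodes with
the same neighbours have the same vector. The two are glued into a non-split extension by letting
`Eᵢ` also send a vector `v ≠ αᵢ` of `V` congruent to `αᵢ` to the class of `αᵢ` in `W`. If `i ≠ j`
have the same neighbours, as do nodes `1` and `2` of `D_n`, then `EᵢEⱼ` acts as a non-zero operator
that maps everything into a submodule it kills; this is impossible over a semisimple ring.
-/

open Module LinearMap

theorem smul_eq_zero_of_forall_smul_mem {A M : Type*} [Ring A] [AddCommGroup M] [Module A M]
    [IsSemisimpleModule A M] {a : A} (K : Submodule A M) (hmem : ∀ m : M, a • m ∈ K)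
    (hzero : ∀ k ∈ K, a • k = 0) (m : M) : a • m = 0 := by
  obtain ⟨K', hK'⟩ := exists_isCompl K
  obtain ⟨k, hk, k', hk', rfl⟩ : ∃ k ∈ K, ∃ k' ∈ K', k + k' = m :=
    Submodule.mem_sup.1 (hK'.sup_eq_top ▸ Submodule.mem_top)
  rw [smul_add, hzero k hk, zero_add]
  exact Submodule.disjoint_def.1 hK'.disjoint _ (hmem k') (K'.smul_mem a hk')

section Transvection

variable {K U : Type*} [CommRing K] [CharP K 2] [AddCommGroup U] [Module K U]

theorem transvection_transvection_apply {f : Dual K U} {u : U} (hu : f u = 0) (x : U) :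
    transvection f u (transvection f u x) = x := by
  rw [transvection.comp_of_left_eq_apply hu, ← two_smul K u, CharTwo.two_eq_zero, zero_smul,
    transvection.of_right_eq_zero, id_apply]

theorem transvection_conj_transvection_apply (f g : Dual K U) {u : U} (v : U) (hu : f u = 0)
    (x : U) : transvection f u (transvection g v (transvection f u x)) =
      transvection (g + g u • f) (v + f v • u) x := by
  have hself : f x • u + f x • u = 0 := by
    rw [← add_smul, CharTwo.add_self_eq_zero, zero_smul]
  calc
    _ = x + (f x • u + f x • u) + (g x + f x * g u) • (v + f v • u) := by
      simp only [transvection.apply, map_add, map_smul, hu]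
      module
    _ = _ := by
      simp only [hself, transvection.apply, LinearMap.add_apply, LinearMap.smul_apply, smul_eq_mul,
        add_zero, mul_comm]

end Transvection

namespace BrauerAlgebra

/-- A root modulo `2` for the projection `p : V → W`: a vector of `V` and its coroot. The coroot is
a form on `W`, so that it also pairs with the image of the vector in `W`; it vanishes on the vector
because `⟨α, α^∨⟩ = 2 = 0`. -/
structure BinaryRoot {V W : Type*} [AddCommGroup V] [Module (ZMod 2) V] [AddCommGroup W]
    [Module (ZMod 2) W] (p : V →ₗ[ZMod 2] W) where
  vec : V
  coroot : Dual (ZMod 2) W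
  coroot_vec : coroot (p vec) = 0

namespace BinaryRoot

variable {V W : Type*} [AddCommGroup V] [Module (ZMod 2) V] [AddCommGroup W] [Module (ZMod 2) W]
  {p : V →ₗ[ZMod 2] W}

/-- The image of the root `β` under the reflection in the root `α`. -/
def reflect (α β : BinaryRoot p) : BinaryRoot p where
  vec := β.vec + α.coroot (p β.vec) • α.vec
  coroot := β.coroot + β.coroot (p α.vec) • α.coroot
  coroot_vec := by
    simp [α.coroot_vec, β.coroot_vec, mul_comm, CharTwo.add_self_eq_zero]

theorem reflect_eq_self {α β : BinaryRoot p} (hαβ : α.coroot (p β.vec) = 0)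
    (hβα : β.coroot (p α.vec) = 0) : α.reflect β = β := by
  simp [reflect, hαβ, hβα]

theorem reflect_comm {α β : BinaryRoot p} (hαβ : α.coroot (p β.vec) = 1)
    (hβα : β.coroot (p α.vec) = 1) : α.reflect β = β.reflect α := by
  simp [reflect, hαβ, hβα, add_comm]

/-- The reflection in `α` as a linear map of `V`. -/
abbrev reflectVec (α : BinaryRoot p) : V →ₗ[ZMod 2] V :=
  transvection (α.coroot ∘ₗ p) α.vec

/-- The reflection in `α` as a linear map of `W`. -/
abbrev reflectImage (α : BinaryRoot p) : W →ₗ[ZMod 2] W :=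
  transvection α.coroot (p α.vec)

theorem map_reflectVec (α : BinaryRoot p) (v : V) :
    p (α.reflectVec v) = α.reflectImage (p v) := by
  simp [transvection.apply]

theorem reflectVec_reflectVec (α : BinaryRoot p) (v : V) : α.reflectVec (α.reflectVec v) = v :=
  transvection_transvection_apply (f := α.coroot ∘ₗ p) α.coroot_vec v

theorem reflectImage_reflectImage (α : BinaryRoot p) (w : W) :
    α.reflectImage (α.reflectImage w) = w :=
  transvection_transvection_apply α.coroot_vec w

theorem reflectVec_eq_iff (α : BinaryRoot p) {v v' : V} :
    α.reflectVec v = v' ↔ v = α.reflectVec v' :=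
  (show Function.Involutive α.reflectVec from α.reflectVec_reflectVec).eq_iff

theorem reflectImage_eq_iff (α : BinaryRoot p) {w w' : W} :
    α.reflectImage w = w' ↔ w = α.reflectImage w' :=
  (show Function.Involutive α.reflectImage from α.reflectImage_reflectImage).eq_iff

theorem reflectVec_vec (α β : BinaryRoot p) : α.reflectVec β.vec = (α.reflect β).vec :=
  rfl

theorem coroot_reflectImage (α β : BinaryRoot p) (w : W) :
    β.coroot (α.reflectImage w) = (α.reflect β).coroot w := by
  simp [transvection.apply, reflect, mul_comm]

theorem reflectVec_conj (α β : BinaryRoot p) (v : V) :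
    α.reflectVec (β.reflectVec (α.reflectVec v)) = (α.reflect β).reflectVec v :=
  transvection_conj_transvection_apply (α.coroot ∘ₗ p) (β.coroot ∘ₗ p) _ α.coroot_vec v

theorem reflectImage_conj (α β : BinaryRoot p) (w : W) :
    α.reflectImage (β.reflectImage (α.reflectImage w)) = (α.reflect β).reflectImage w := by
  simp only [reflectImage, reflect, map_add, map_smul]
  exact transvection_conj_transvection_apply _ _ _ α.coroot_vec w

variable (R N : Type*) [CommRing R] [AddCommGroup N] [Module R N]

/-- The operator by which the generator `R_i` with root `α` acts on pairs of functions on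
`V` and `W`. -/
def reflection (α : BinaryRoot p) : Module.End R ((V → N) × (W → N)) :=
  (funLeft R N α.reflectVec).prodMap (funLeft R N α.reflectImage)

open Classical in
/-- The operator by which the generator `E_i` with root `α` acts on pairs of functions on
`V` and `W`. It is the pullback along a partial map of `V ⊔ W` to itself, extended by zero. -/
noncomputable def contraction (α : BinaryRoot p) : Module.End R ((V → N) × (W → N)) where
  toFun m :=
    (fun v ↦ if α.coroot (p v) = 1 then m.1 α.vec
      else if v ≠ α.vec ∧ p v = p α.vec then m.2 (p α.vec) else 0,
    fun w ↦ if α.coroot w = 1 then m.2 (p α.vec) else 0)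
  map_add' m m' := by
    ext <;> dsimp only [Prod.fst_add, Prod.snd_add, Pi.add_apply] <;> split_ifs <;> simp
  map_smul' r m := by
    ext <;> dsimp only [Prod.smul_fst, Prod.smul_snd, Pi.smul_apply] <;> split_ifs <;> simp

variable {R N}

@[simp]
theorem reflection_apply_fst (α : BinaryRoot p) (m : (V → N) × (W → N)) (v : V) :
    (reflection R N α m).1 v = m.1 (α.reflectVec v) :=
  rfl

@[simp]
theorem reflection_apply_snd (α : BinaryRoot p) (m : (V → N) × (W → N)) (w : W) :
    (reflection R N α m).2 w = m.2 (α.reflectImage w) :=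
  rfl

open Classical in
theorem contraction_apply_fst (α : BinaryRoot p) (m : (V → N) × (W → N)) (v : V) :
    (contraction R N α m).1 v = if α.coroot (p v) = 1 then m.1 α.vec
      else if v ≠ α.vec ∧ p v = p α.vec then m.2 (p α.vec) else 0 :=
  rfl

open Classical in
theorem contraction_apply_snd (α : BinaryRoot p) (m : (V → N) × (W → N)) (w : W) :
    (contraction R N α m).2 w = if α.coroot w = 1 then m.2 (p α.vec) else 0 :=
  rfl

theorem end_prod_pi_ext {X Y : Type*} {f g : Module.End R ((X → N) × (Y → N))}
    (hfst : ∀ m x, (f m).1 x = (g m).1 x) (hsnd : ∀ m y, (f m).2 y = (g m).2 y) : f = g :=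
  LinearMap.ext fun m ↦ Prod.ext (funext (hfst m)) (funext (hsnd m))

theorem reflection_mul_self (α : BinaryRoot p) : reflection R N α * reflection R N α = 1 :=
  end_prod_pi_ext (fun m v ↦ congrArg m.1 (α.reflectVec_reflectVec v))
    fun m w ↦ congrArg m.2 (α.reflectImage_reflectImage w)

theorem reflection_conj_reflection (α β : BinaryRoot p) :
    reflection R N α * reflection R N β * reflection R N α = reflection R N (α.reflect β) :=
  end_prod_pi_ext (fun m v ↦ congrArg m.1 (α.reflectVec_conj β v))
    fun m w ↦ congrArg m.2 (α.reflectImage_conj β w)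

theorem reflection_conj_contraction (α β : BinaryRoot p) :
    reflection R N α * contraction R N β * reflection R N α = contraction R N (α.reflect β) := by
  classical
  have hp : p (α.reflect β).vec = α.reflectImage (p β.vec) := α.map_reflectVec β.vec
  apply end_prod_pi_ext <;> intro m x <;>
    simp only [Module.End.mul_apply, reflection_apply_fst, reflection_apply_snd,
      contraction_apply_fst, contraction_apply_snd, map_reflectVec, coroot_reflectImage, ne_eq,
      reflectVec_eq_iff, reflectImage_eq_iff, reflectVec_vec, hp]

theorem reflectVec_self (α : BinaryRoot p) : α.reflectVec α.vec = α.vec := by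
  simp [transvection.apply, α.coroot_vec]

theorem contraction_mul_reflection (α : BinaryRoot p) :
    contraction R N α * reflection R N α = contraction R N α := by
  have hW : α.reflectImage (p α.vec) = p α.vec := by
    rw [← map_reflectVec, reflectVec_self]
  apply end_prod_pi_ext <;> intro m x <;>
    simp only [Module.End.mul_apply, reflection_apply_fst, reflection_apply_snd,
      contraction_apply_fst, contraction_apply_snd, reflectVec_self, hW]

theorem reflection_mul_contraction (α : BinaryRoot p) :
    reflection R N α * contraction R N α = contraction R N α := by
  have hconj : reflection R N α * contraction R N α * reflection R N α = contraction R N α := by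
    rw [reflection_conj_contraction, reflect_eq_self α.coroot_vec α.coroot_vec]
  rwa [mul_assoc, contraction_mul_reflection] at hconj

theorem commute_of_reflection_conj {α : BinaryRoot p} {f : Module.End R ((V → N) × (W → N))}
    (hf : reflection R N α * f * reflection R N α = f) : Commute f (reflection R N α) := by
  calc
    f * reflection R N α = reflection R N α * (f * (reflection R N α * reflection R N α)) := by
      nth_rw 1 [← hf]
      simp only [mul_assoc]
    _ = reflection R N α * f := by rw [reflection_mul_self, mul_one]

theorem commute_reflection_reflection {α β : BinaryRoot p} (hαβ : α.coroot (p β.vec) = 0)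
    (hβα : β.coroot (p α.vec) = 0) : Commute (reflection R N α) (reflection R N β) :=
  commute_of_reflection_conj <| by rw [reflection_conj_reflection, reflect_eq_self hβα hαβ]

theorem commute_contraction_reflection {α β : BinaryRoot p} (hαβ : α.coroot (p β.vec) = 0)
    (hβα : β.coroot (p α.vec) = 0) : Commute (contraction R N α) (reflection R N β) :=
  commute_of_reflection_conj <| by rw [reflection_conj_contraction, reflect_eq_self hβα hαβ]

open Classical in
theorem contraction_contraction_apply_of_orthogonal {α β : BinaryRoot p}
    (hβα : β.coroot (p α.vec) = 0) (m : (V → N) × (W → N)) :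
    contraction R N α (contraction R N β m) =
      (fun v ↦ if α.coroot (p v) = 1 ∧ α.vec ≠ β.vec ∧ p α.vec = p β.vec then m.2 (p β.vec) else 0,
        0) := by
  ext x
  · simp only [contraction_apply_fst, contraction_apply_snd, hβα, zero_ne_one, if_false, ite_self,
      ite_and]
  · simp [contraction_apply_snd, hβα]

theorem contraction_mul_self (α : BinaryRoot p) :
    contraction R N α * contraction R N α = 0 :=
  end_prod_pi_ext (by simp [contraction_contraction_apply_of_orthogonal α.coroot_vec])
    (by simp [contraction_contraction_apply_of_orthogonal α.coroot_vec])

theorem commute_contraction_contraction {α β : BinaryRoot p} (hαβ : α.coroot (p β.vec) = 0)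
    (hβα : β.coroot (p α.vec) = 0) (hcoroot : p α.vec = p β.vec → α.coroot = β.coroot) :
    Commute (contraction R N α) (contraction R N β) := by
  classical
  refine LinearMap.ext fun m ↦ ?_
  rw [Module.End.mul_apply, Module.End.mul_apply, contraction_contraction_apply_of_orthogonal hβα,
    contraction_contraction_apply_of_orthogonal hαβ]
  by_cases hp : p α.vec = p β.vec
  · simp only [hp, hcoroot hp, ne_comm]
  · simp only [hp, Ne.symm hp, and_false, if_false]

theorem reflection_mul_reflection_mul_contraction {α β : BinaryRoot p}
    (hαβ : α.coroot (p β.vec) = 1) (hβα : β.coroot (p α.vec) = 1) :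
    reflection R N β * reflection R N α * contraction R N β =
      contraction R N α * contraction R N β := by
  classical
  have hvec : β.reflectVec (α.reflectVec β.vec) = α.vec := by
    rw [reflectVec_vec, reflect_comm hαβ hβα, ← reflectVec_vec, reflectVec_reflectVec]
  have himage : β.reflectImage (α.reflectImage (p β.vec)) = p α.vec := by
    rw [← map_reflectVec, ← map_reflectVec, hvec]
  have hcoroot (w : W) : β.coroot (α.reflectImage (β.reflectImage w)) = α.coroot w := by
    rw [coroot_reflectImage, reflect_comm hαβ hβα, ← coroot_reflectImage,
      reflectImage_reflectImage]
  apply end_prod_pi_ext <;> intro m x <;>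
    simp only [Module.End.mul_apply, reflection_apply_fst, reflection_apply_snd,
      contraction_apply_fst, contraction_apply_snd, map_reflectVec, hcoroot, ne_eq,
      reflectVec_eq_iff, reflectImage_eq_iff, hvec, himage, hβα, if_true]

end BinaryRoot

section Representation

variable {n : ℕ} (Q : SimpleGraph (Fin n))

/-- The space `W` of `𝔽₂`-valued functions on the neighbourhoods of `Q`. Nodes with the same
neighbours have the same root in `W` and the same coroot. -/
abbrev NeighborSpace : Type := Set.range Q.neighborSet → ZMod 2

/-- The space `V`, an extension of `NeighborSpace Q` in which distinct nodes have distinct roots. -/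
abbrev RootSpace : Type := NeighborSpace Q × (Fin n → ZMod 2)

/-- The root modulo `2` of the node `i`, whose coroot is evaluation at the neighbourhood of `i`. -/
noncomputable def nodeRoot (i : Fin n) :
    BinaryRoot (LinearMap.fst (ZMod 2) (NeighborSpace Q) (Fin n → ZMod 2)) where
  vec := (fun s ↦ (s : Set (Fin n)).indicator 1 i, Pi.single i 1)
  coroot := LinearMap.proj ⟨Q.neighborSet i, i, rfl⟩
  coroot_vec := by simp

variable {Q} {i j : Fin n}

theorem nodeRoot_coroot_of_adj (hadj : Q.Adj i j) :
    (nodeRoot Q i).coroot (nodeRoot Q j).vec.1 = 1 := by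
  simp [nodeRoot, hadj]

theorem nodeRoot_coroot_of_not_adj (hadj : ¬ Q.Adj i j) :
    (nodeRoot Q i).coroot (nodeRoot Q j).vec.1 = 0 := by
  simp [nodeRoot, hadj]

theorem nodeRoot_vec_ne (hne : i ≠ j) : (nodeRoot Q i).vec ≠ (nodeRoot Q j).vec := fun h ↦ by
  simpa [nodeRoot, hne] using congrFun (congrArg Prod.snd h) i

theorem nodeRoot_vec_fst_eq_iff :
    (nodeRoot Q i).vec.1 = (nodeRoot Q j).vec.1 ↔ Q.neighborSet i = Q.neighborSet j := by
  classical
  simp only [nodeRoot, funext_iff, Set.forall_subtype_range_iff, Set.ext_iff,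
    SimpleGraph.mem_neighborSet, Set.indicator_apply, Pi.one_apply]
  refine forall_congr' fun k ↦ ?_
  rw [Q.adj_comm k i, Q.adj_comm k j]
  by_cases hi : Q.Adj i k <;> by_cases hj : Q.Adj j k <;> simp [hi, hj]

theorem nodeRoot_coroot_congr (h : Q.neighborSet i = Q.neighborSet j) :
    (nodeRoot Q i).coroot = (nodeRoot Q j).coroot := by
  simp only [nodeRoot, h]

variable (Q) (R N : Type*) [CommRing R] [AddCommGroup N] [Module R N]

/-- The operators by which the generators of `Br(Q, R, δ)` act on pairs of functions on the two
spaces of roots, with the generators encoded as in `BrauerRel`. -/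
noncomputable def generatorAction :
    Fin n ⊕ Fin n → Module.End R ((RootSpace Q → N) × (NeighborSpace Q → N)) :=
  Sum.elim (fun i ↦ (nodeRoot Q i).reflection R N) fun i ↦ (nodeRoot Q i).contraction R N

variable {Q R} {δ : R}

open BinaryRoot in
theorem lift_generatorAction_eq_of_brauerRel (hδ : ∀ x : N, δ • x = 0)
    {a b : FreeAlgebra R (Fin n ⊕ Fin n)} (hab : BrauerRel n Q R δ a b) :
    FreeAlgebra.lift R (generatorAction Q R N) a =
      FreeAlgebra.lift R (generatorAction Q R N) b := by
  have hδ' (f : Module.End R ((RootSpace Q → N) × (NeighborSpace Q → N))) : δ • f = 0 :=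
    end_prod_pi_ext (fun _ _ ↦ hδ _) fun _ _ ↦ hδ _
  cases hab <;>
    simp only [map_mul, map_one, map_smul, lift_ι_apply, generatorAction, Sum.elim_inl,
      Sum.elim_inr]
  case rsq i => exact reflection_mul_self _
  case re i => exact reflection_mul_contraction _
  case er i => exact contraction_mul_reflection _
  case esq i => rw [contraction_mul_self, hδ']
  case rr i j _ hadj =>
    exact commute_reflection_reflection (nodeRoot_coroot_of_not_adj hadj)
      (nodeRoot_coroot_of_not_adj (mt SimpleGraph.Adj.symm hadj))
  case erc i j _ hadj =>
    exact commute_contraction_reflection (nodeRoot_coroot_of_not_adj hadj)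
      (nodeRoot_coroot_of_not_adj (mt SimpleGraph.Adj.symm hadj))
  case ee i j _ hadj =>
    exact commute_contraction_contraction (nodeRoot_coroot_of_not_adj hadj)
      (nodeRoot_coroot_of_not_adj (mt SimpleGraph.Adj.symm hadj))
      fun h ↦ nodeRoot_coroot_congr (nodeRoot_vec_fst_eq_iff.1 h)
  case braid i j hadj =>
    rw [reflection_conj_reflection, reflection_conj_reflection,
      reflect_comm (nodeRoot_coroot_of_adj hadj) (nodeRoot_coroot_of_adj hadj.symm)]
  case rre i j hadj =>
    exact reflection_mul_reflection_mul_contraction (nodeRoot_coroot_of_adj hadj)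
      (nodeRoot_coroot_of_adj hadj.symm)
  case rer i j hadj =>
    rw [reflection_conj_contraction, reflection_conj_contraction,
      reflect_comm (nodeRoot_coroot_of_adj hadj) (nodeRoot_coroot_of_adj hadj.symm)]

/-- The representation of `Br(Q, R, δ)` by reflections and contractions, for coefficients `N`
annihilated by `δ`. -/
noncomputable def representation (hδ : ∀ x : N, δ • x = 0) :
    BrauerAlgebra n Q R δ →ₐ[R] Module.End R ((RootSpace Q → N) × (NeighborSpace Q → N)) :=
  RingQuot.liftAlgHom R ⟨FreeAlgebra.lift R (generatorAction Q R N),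
    fun _ _ ↦ lift_generatorAction_eq_of_brauerRel N hδ⟩

variable {N}

theorem representation_mkAlgHom_ι (hδ : ∀ x : N, δ • x = 0) (x : Fin n ⊕ Fin n) :
    representation N hδ (RingQuot.mkAlgHom R (BrauerRel n Q R δ) (ι R x)) =
      generatorAction Q R N x := by
  rw [representation, RingQuot.liftAlgHom_mkAlgHom_apply, lift_ι_apply]

theorem generatorAction_snd_eq_zero (x : Fin n ⊕ Fin n)
    {m : (RootSpace Q → N) × (NeighborSpace Q → N)} (hm : m.2 = 0) :
    (generatorAction Q R N x m).2 = 0 := by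
  ext w
  cases x <;> simp [generatorAction, BinaryRoot.contraction_apply_snd, hm]

theorem representation_snd_eq_zero (hδ : ∀ x : N, δ • x = 0) (a : BrauerAlgebra n Q R δ)
    {m : (RootSpace Q → N) × (NeighborSpace Q → N)} (hm : m.2 = 0) :
    (representation N hδ a m).2 = 0 := by
  obtain ⟨a, rfl⟩ := RingQuot.mkAlgHom_surjective R (BrauerRel n Q R δ) a
  induction a using FreeAlgebra.induction generalizing m with
  | grade0 r => simp [hm]
  | grade1 x => rw [representation_mkAlgHom_ι, generatorAction_snd_eq_zero x hm]
  | mul a b ha hb => rw [map_mul, map_mul, Module.End.mul_apply, ha (hb hm)]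
  | add a b ha hb =>
    rw [map_add, map_add, LinearMap.add_apply, Prod.snd_add, ha hm, hb hm, add_zero]

theorem contraction_contraction_apply_of_neighborSet_eq (hne : i ≠ j)
    (hnbr : Q.neighborSet i = Q.neighborSet j) (m : (RootSpace Q → N) × (NeighborSpace Q → N)) :
    (nodeRoot Q i).contraction R N ((nodeRoot Q j).contraction R N m) =
      (fun v ↦ if (nodeRoot Q i).coroot v.1 = 1 then m.2 (nodeRoot Q j).vec.1 else 0, 0) := by
  have hadj : ¬ Q.Adj j i := fun h ↦ Q.irrefl (hnbr ▸ h : i ∈ Q.neighborSet i)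
  rw [BinaryRoot.contraction_contraction_apply_of_orthogonal (nodeRoot_coroot_of_not_adj hadj)]
  simp [nodeRoot_vec_ne hne, nodeRoot_vec_fst_eq_iff.2 hnbr]

theorem not_isSemisimpleRing_of_neighborSet_eq [Nontrivial N] (hδ : ∀ x : N, δ • x = 0)
    (hne : i ≠ j) (hnbr : Q.neighborSet i = Q.neighborSet j) :
    ¬ IsSemisimpleRing (BrauerAlgebra n Q R δ) := by
  intro _
  let := Module.compHom ((RootSpace Q → N) × (NeighborSpace Q → N))
    (representation (Q := Q) N hδ).toRingHom
  have smul_def (a : BrauerAlgebra n Q R δ) (m : (RootSpace Q → N) × (NeighborSpace Q → N)) :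
      a • m = representation N hδ a m := rfl
  let K : Submodule (BrauerAlgebra n Q R δ) ((RootSpace Q → N) × (NeighborSpace Q → N)) :=
    { carrier := {m | m.2 = 0}
      zero_mem' := rfl
      add_mem' := fun hm hm' ↦ by simp_all
      smul_mem' := fun a _ hm ↦ representation_snd_eq_zero hδ a hm }
  let e : BrauerAlgebra n Q R δ :=
    RingQuot.mkAlgHom R _ (ι R (.inr i)) * RingQuot.mkAlgHom R _ (ι R (.inr j))
  have he (m : (RootSpace Q → N) × (NeighborSpace Q → N)) : e • m =
      (fun v ↦ if (nodeRoot Q i).coroot v.1 = 1 then m.2 (nodeRoot Q j).vec.1 else 0, 0) := by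
    rw [smul_def, map_mul, representation_mkAlgHom_ι, representation_mkAlgHom_ι]
    exact contraction_contraction_apply_of_neighborSet_eq hne hnbr m
  obtain ⟨c, hc⟩ := exists_ne (0 : N)
  have hzero : e • ((0, fun _ ↦ c) : (RootSpace Q → N) × (NeighborSpace Q → N)) = 0 :=
    smul_eq_zero_of_forall_smul_mem K (fun m ↦ congrArg Prod.snd (he m))
      (fun k (hk : k.2 = 0) ↦ by simp [he, hk, Prod.ext_iff, funext_iff]) _
  have hval := congrFun (congrArg Prod.fst ((he _).symm.trans hzero)) (fun _ ↦ 1, 0)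
  exact hc (by simpa [nodeRoot] using hval)

end Representation

end BrauerAlgebra

theorem typeD_neighborSet_zero_eq_neighborSet_one {n : ℕ} (h₀ : 0 < n) (h₁ : 1 < n) :
    (typeD n).neighborSet ⟨0, h₀⟩ = (typeD n).neighborSet ⟨1, h₁⟩ := by
  ext k
  simp only [SimpleGraph.mem_neighborSet, typeD, SimpleGraph.fromRel_adj, ne_eq, Fin.ext_iff]
  grind

theorem brauerAlgebra_typeD_complex_deltaZero_not_isSemisimpleRing_general {n : ℕ}
    {Q : SimpleGraph (Fin n)} {R : Type*} [CommRing R] {δ : R} (hδ : ¬ IsUnit δ) {i j : Fin n}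
    (hne : i ≠ j) (hnbr : Q.neighborSet i = Q.neighborSet j) :
    ¬ IsSemisimpleRing (BrauerAlgebra n Q R δ) := by
  have : Nontrivial (R ⧸ Ideal.span {δ}) :=
    Ideal.Quotient.nontrivial_iff.2 (mt Ideal.span_singleton_eq_top.1 hδ)
  have hquot (x : R ⧸ Ideal.span {δ}) : δ • x = 0 := by
    rw [Algebra.smul_def, Ideal.Quotient.algebraMap_eq, Ideal.Quotient.mk_singleton_self, zero_mul]
  exact BrauerAlgebra.not_isSemisimpleRing_of_neighborSet_eq hquot hne hnbr

/-- Let `n ≥ 4` with `n ∉ {1,3,5}`. Then the Brauer algebra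
`Br(D_n, ℂ, 0)` with parameter `δ = 0` is not a semisimple ring. -/
theorem brauerAlgebra_typeD_complex_deltaZero_not_isSemisimpleRing
    (n : ℕ) (hn : 4 ≤ n) (hn' : n ∉ ({1, 3, 5} : Set ℕ)) :
    ¬ IsSemisimpleRing (BrauerAlgebra n (typeD n) ℂ 0) :=
  brauerAlgebra_typeD_complex_deltaZero_not_isSemisimpleRing_general not_isUnit_zero
    (Fin.ne_of_val_ne zero_ne_one) (typeD_neighborSet_zero_eq_neighborSet_one (by lia) (by lia))
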